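/- Let A be a finite nonempty set of n agents, v a real-valued characteristic function on the nonempty subsets of A, λ > 2·Σ_C |v(C)|, and f(x) = −Σ_C v(C)·x_C + λ·Σ_{a∈A} (Σ_{C ∋ a} x_C − 1)² for binary vectors x indexed by the nonempty subsets of A. Then a binary vector x* minimizes f over all binary vectors if and only if x* satisfies the covering constraint and maximizes Σ_C v(C)·x_C among all binary vectors satisfying the covering constraint. Consequently, the minimizers of the QUBO objective f are exactly the indicator vectors of optimal coalition structures. -/

import Mathlib

/-- The nonempty coalitions over the agent set `A`. -/
def coalitions {α : Type*} [DecidableEq α] (A : Finset α) : Finset (Finset α) :=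
  A.powerset.filter (fun C => C ≠ ∅)

/-- The penalized QUBO objective of BILP-Q:
`f(x) = −Σ_C v(C)·x_C + λ·Σ_{a∈A} (Σ_{C ∋ a} x_C − 1)²`. -/
def penalizedObjective {α : Type*} [DecidableEq α] (A : Finset α)
    (v : Finset α → ℝ) (lam : ℝ) (x : Finset α → ℝ) : ℝ :=
  -(∑ C ∈ coalitions A, v C * x C) +
    lam * ∑ a ∈ A, ((∑ C ∈ (coalitions A).filter (fun C => a ∈ C), x C) - 1) ^ 2

/-!
If every value of a function off a nonempty set `F` exceeds every value on `F`, its minimizers all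
lie in `F`. For the QUBO objective, take `F` to be the exact covers, nonempty thanks to the grand
coalition. An uncovered or multiply covered agent costs at least `λ`, because `Σ_{C ∋ a} x_C` is an
integer, while two binary vectors differ in coalition value by at most `Σ_C |v(C)|`, because
`|x_C - y_C| ≤ 1`. Once `λ > Σ_C |v(C)|`, violating the covering constraint therefore costs more
than it can gain, and on `F` the objective is minus the coalition value.
-/

theorem isMinOn_iff_mem_and_isMinOn_of_forall_lt {β γ : Type*} [Preorder γ] {f : β → γ}
    {S F : Set β} {x : β} (hFS : F ⊆ S) (hF : F.Nonempty)
    (hlt : ∀ y ∈ F, ∀ z ∈ S \ F, f y < f z) (hx : x ∈ S) :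
    IsMinOn f S x ↔ x ∈ F ∧ IsMinOn f F x := by
  constructor
  · intro hmin
    refine ⟨?_, hmin.on_subset hFS⟩
    by_contra hxF
    obtain ⟨y, hy⟩ := hF
    exact (hlt y hy x ⟨hx, hxF⟩).not_ge (hmin (hFS hy))
  · rintro ⟨hxF, hmin⟩ z hz
    by_cases hzF : z ∈ F
    · exact hmin hzF
    · exact (hlt x hxF z ⟨hz, hzF⟩).le

section OrderedRing

variable {R : Type*} [CommRing R] [LinearOrder R] [IsStrictOrderedRing R]

theorem one_le_sq_of_mem_range_intCast {r : R} (hr : r ∈ (Int.castAddHom R).range)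
    (hr0 : r ≠ 0) : 1 ≤ r ^ 2 := by
  obtain ⟨n, rfl⟩ := hr
  have hn : n ≠ 0 := by
    rintro rfl
    exact hr0 (map_zero _)
  simp only [one_le_sq_iff_one_le_abs, Int.coe_castAddHom]
  exact_mod_cast Int.one_le_abs hn

theorem sum_mul_sub_sum_mul_le_sum_abs {ι : Type*} {s : Finset ι} {v x y : ι → R}
    (hxy : ∀ i ∈ s, |x i - y i| ≤ 1) :
    ∑ i ∈ s, v i * x i - ∑ i ∈ s, v i * y i ≤ ∑ i ∈ s, |v i| := by
  rw [← Finset.sum_sub_distrib]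
  refine Finset.sum_le_sum fun i hi => ?_
  calc v i * x i - v i * y i = v i * (x i - y i) := (mul_sub ..).symm
    _ ≤ |v i * (x i - y i)| := le_abs_self _
    _ = |v i| * |x i - y i| := abs_mul ..
    _ ≤ |v i| := mul_le_of_le_one_right (abs_nonneg _) (hxy i hi)

end OrderedRing

/-- The 0/1-valued real vectors indexed by `ι`. -/
def binaryVectors (ι : Type*) : Set (ι → ℝ) :=
  {x | ∀ i, x i = 0 ∨ x i = 1}

theorem abs_sub_le_one_of_mem_binaryVectors {ι : Type*} {x y : ι → ℝ}
    (hx : x ∈ binaryVectors ι) (hy : y ∈ binaryVectors ι) (i : ι) : |x i - y i| ≤ 1 := by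
  rcases hx i with hxi | hxi <;> rcases hy i with hyi | hyi <;> simp [hxi, hyi]

theorem sum_mem_range_intCast_of_mem_binaryVectors {ι : Type*} {x : ι → ℝ}
    (hx : x ∈ binaryVectors ι) (s : Finset ι) : ∑ i ∈ s, x i ∈ (Int.castAddHom ℝ).range := by
  refine sum_mem fun i _ => ?_
  rcases hx i with hxi | hxi
  · exact ⟨0, by simp [hxi]⟩
  · exact ⟨1, by simp [hxi]⟩

section QUBO

variable {α : Type*} [DecidableEq α] {A : Finset α} {v : Finset α → ℝ} {lam : ℝ}
  {x y : Finset α → ℝ}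

/-- The number `Σ_{C ∋ a} x_C` of coalitions selected by `x` that contain the agent `a`. -/
def coverage (A : Finset α) (x : Finset α → ℝ) (a : α) : ℝ :=
  ∑ C ∈ coalitions A with a ∈ C, x C

/-- The binary vectors satisfying the covering constraint, i.e. the indicator vectors of coalition
structures on `A`. Entries off `coalitions A` are irrelevant and only required to be binary. -/
def exactCovers (A : Finset α) : Set (Finset α → ℝ) :=
  {x ∈ binaryVectors (Finset α) | ∀ a ∈ A, coverage A x a = 1}

/-- The linear objective `Σ_C v(C)·x_C`. -/
def coalitionValue (A : Finset α) (v x : Finset α → ℝ) : ℝ :=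
  ∑ C ∈ coalitions A, v C * x C

theorem penalizedObjective_eq (A : Finset α) (v : Finset α → ℝ) (lam : ℝ) (x : Finset α → ℝ) :
    penalizedObjective A v lam x =
      -coalitionValue A v x + lam * ∑ a ∈ A, (coverage A x a - 1) ^ 2 :=
  rfl

theorem exactCovers_nonempty (A : Finset α) : (exactCovers A).Nonempty := by
  refine ⟨Pi.single A 1, fun C => ?_, fun a ha => ?_⟩
  · rw [Pi.single_apply]
    exact (ite_eq_or_eq _ _ _).symm
  · have hA : A ∈ (coalitions A).filter (a ∈ ·) := by
      simp [coalitions, ha, Finset.ne_empty_of_mem ha]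
    rw [coverage, Finset.sum_pi_single', if_pos hA]

theorem penalizedObjective_of_mem_exactCovers (hx : x ∈ exactCovers A) :
    penalizedObjective A v lam x = -coalitionValue A v x := by
  have hpenalty : ∑ a ∈ A, (coverage A x a - 1) ^ 2 = 0 :=
    Finset.sum_eq_zero fun a ha => by rw [hx.2 a ha, sub_self, zero_pow two_ne_zero]
  rw [penalizedObjective_eq, hpenalty, mul_zero, add_zero]

theorem one_le_sum_sq_coverage_sub_one (hx : x ∈ binaryVectors (Finset α) \ exactCovers A) :
    1 ≤ ∑ a ∈ A, (coverage A x a - 1) ^ 2 := by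
  obtain ⟨hbin, hcover⟩ := hx
  obtain ⟨a, ha, hne⟩ : ∃ a ∈ A, coverage A x a ≠ 1 := by
    by_contra! hall
    exact hcover ⟨hbin, hall⟩
  have hint : coverage A x a - 1 ∈ (Int.castAddHom ℝ).range :=
    sub_mem (sum_mem_range_intCast_of_mem_binaryVectors hbin _) ⟨1, by simp⟩
  calc 1 ≤ (coverage A x a - 1) ^ 2 := one_le_sq_of_mem_range_intCast hint (sub_ne_zero.2 hne)
    _ ≤ ∑ a ∈ A, (coverage A x a - 1) ^ 2 :=
      Finset.single_le_sum (f := fun a => (coverage A x a - 1) ^ 2) (fun _ _ => sq_nonneg _) ha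

theorem penalizedObjective_lt_of_mem_exactCovers_of_notMem
    (hlam : ∑ C ∈ coalitions A, |v C| < lam) (hx : x ∈ exactCovers A)
    (hy : y ∈ binaryVectors (Finset α) \ exactCovers A) :
    penalizedObjective A v lam x < penalizedObjective A v lam y := by
  have hvalue : coalitionValue A v y - coalitionValue A v x ≤ ∑ C ∈ coalitions A, |v C| :=
    sum_mul_sub_sum_mul_le_sum_abs fun C _ => abs_sub_le_one_of_mem_binaryVectors hy.1 hx.1 C
  have hlam_nonneg : 0 ≤ lam := (Finset.sum_nonneg fun _ _ => abs_nonneg _).trans hlam.le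
  have hpenalty : lam ≤ lam * ∑ a ∈ A, (coverage A y a - 1) ^ 2 :=
    le_mul_of_one_le_right hlam_nonneg (one_le_sum_sq_coverage_sub_one hy)
  rw [penalizedObjective_of_mem_exactCovers hx, penalizedObjective_eq]
  linarith

theorem isMinOn_penalizedObjective_exactCovers_iff (hx : x ∈ exactCovers A) :
    IsMinOn (penalizedObjective A v lam) (exactCovers A) x ↔
      IsMaxOn (coalitionValue A v) (exactCovers A) x := by
  rw [isMinOn_iff, isMaxOn_iff]
  refine forall₂_congr fun y hy => ?_
  rw [penalizedObjective_of_mem_exactCovers hx, penalizedObjective_of_mem_exactCovers hy,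
    neg_le_neg_iff]

theorem qubo_minimizers_are_optimal_structures_general
    (hlam : ∑ C ∈ coalitions A, |v C| < lam) (hx : x ∈ binaryVectors (Finset α)) :
    IsMinOn (penalizedObjective A v lam) (binaryVectors (Finset α)) x ↔
      x ∈ exactCovers A ∧ IsMaxOn (coalitionValue A v) (exactCovers A) x := by
  rw [isMinOn_iff_mem_and_isMinOn_of_forall_lt (Set.sep_subset _ _) (exactCovers_nonempty A)
    (fun _ hy _ hz => penalizedObjective_lt_of_mem_exactCovers_of_notMem hlam hy hz) hx]
  exact and_congr_right isMinOn_penalizedObjective_exactCovers_iff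

end QUBO

/-- For `λ > 2·Σ_C |v(C)|`, a binary vector `x*` minimizes the penalized objective
over all binary vectors iff it satisfies the covering constraint and maximizes
`Σ_C v(C)·x_C` among all binary vectors satisfying the covering constraint. -/
theorem qubo_minimizers_are_optimal_structures {α : Type*} [DecidableEq α]
    (A : Finset α) (hA : A.Nonempty) (v : Finset α → ℝ) (lam : ℝ)
    (hlam : lam > 2 * ∑ C ∈ coalitions A, |v C|)
    (xstar : Finset α → ℝ) (hxstar : ∀ C, xstar C = 0 ∨ xstar C = 1) :
    (∀ y : Finset α → ℝ, (∀ C, y C = 0 ∨ y C = 1) →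
        penalizedObjective A v lam xstar ≤ penalizedObjective A v lam y) ↔
      ((∀ a ∈ A, ∑ C ∈ (coalitions A).filter (fun C => a ∈ C), xstar C = 1) ∧
       (∀ y : Finset α → ℝ, (∀ C, y C = 0 ∨ y C = 1) →
          (∀ a ∈ A, ∑ C ∈ (coalitions A).filter (fun C => a ∈ C), y C = 1) →
          ∑ C ∈ coalitions A, v C * y C ≤ ∑ C ∈ coalitions A, v C * xstar C)) := by
  have hsum : 0 ≤ ∑ C ∈ coalitions A, |v C| := Finset.sum_nonneg fun _ _ => abs_nonneg _
  simpa [isMinOn_iff, isMaxOn_iff, binaryVectors, exactCovers, coverage, coalitionValue, hxstar]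
    using qubo_minimizers_are_optimal_structures_general (by linarith) hxstar
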